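/- Let D ⊆ ℝ^{n+1} be a convex set, p ∈ ∂D, and suppose L₁, L₂ are two lines through p each of which is locally contained in ∂D near p. Then the 2-dimensional affine plane spanned by L₁ and L₂ is locally contained in ∂D near p. -/

import Mathlib

open Set

/-!
Translate `p` to `0`, so that `L₁` and `L₂` become finite-dimensional subspaces `A` and `B`. The
addition map `A × B → A ⊔ B` is open, so a point `x` of `A ⊔ B` near `0` is a sum `a + b` with
`a ∈ A` and `b ∈ B` near `0`. It is the midpoint of `2 • a` and `2 • b`, hence lies in the convex
set `closure D`. It is not interior to `D`: otherwise `0`, the midpoint of `x` and the point `-x` of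
`closure D`, would be interior as well.
-/

section

open Filter
open scoped Topology Pointwise

section FiniteDimensional

variable {𝕜 E F : Type*} [NontriviallyNormedField 𝕜] [CompleteSpace 𝕜]
  [AddCommGroup E] [Module 𝕜 E] [TopologicalSpace E] [IsTopologicalAddGroup E]
  [ContinuousSMul 𝕜 E] [T2Space E]
  [AddCommGroup F] [Module 𝕜 F] [TopologicalSpace F] [IsTopologicalAddGroup F]
  [ContinuousSMul 𝕜 F]

theorem map_nhds_eq_nhdsWithin_range_of_finiteDimensional (f : F →L[𝕜] E)
    [FiniteDimensional 𝕜 f.range] (x : F) : map f (𝓝 x) = 𝓝[f.range] (f x) := by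
  have hopen : IsOpenMap f.rangeRestrict :=
    (f : F →ₗ[𝕜] E).rangeRestrict.isOpenMap_of_finiteDimensional
      (f : F →ₗ[𝕜] E).surjective_rangeRestrict
  calc map f (𝓝 x)
      = map Subtype.val (map f.rangeRestrict (𝓝 x)) := map_map.symm
    _ = map Subtype.val (𝓝 (f.rangeRestrict x)) := by
        rw [hopen.map_nhds_eq f.rangeRestrict.continuous.continuousAt]
    _ = 𝓝[f.range] (f x) := map_nhds_subtype_val _

theorem nhdsWithin_zero_sup_eq_add (A B : Submodule 𝕜 E)
    [FiniteDimensional 𝕜 A] [FiniteDimensional 𝕜 B] :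
    𝓝[(A ⊔ B : Submodule 𝕜 E)] (0 : E) = 𝓝[A] 0 + 𝓝[B] 0 := by
  let sum : A × B →L[𝕜] E := A.subtypeL.coprod B.subtypeL
  have range_sum : sum.range = A ⊔ B := by
    simp only [sum, ContinuousLinearMap.range_coprod, Submodule.toLinearMap_subtypeL,
      Submodule.range_subtype]
  have : FiniteDimensional 𝕜 sum.range := range_sum ▸ inferInstance
  calc 𝓝[(A ⊔ B : Submodule 𝕜 E)] (0 : E)
      = map sum (𝓝 0) := by
        rw [map_nhds_eq_nhdsWithin_range_of_finiteDimensional, map_zero, range_sum]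
    _ = map₂ (fun (a : A) (b : B) => (a : E) + b) (𝓝 0) (𝓝 0) := by
        rw [← map_prod_eq_map₂, ← nhds_prod_eq]; rfl
    _ = map ((↑) : A → E) (𝓝 0) + map ((↑) : B → E) (𝓝 0) := by
        rw [← map₂_add, map₂_map_left, map₂_map_right]
    _ = 𝓝[A] 0 + 𝓝[B] 0 :=
        congrArg₂ (· + ·) (map_nhds_subtype_val (0 : A)) (map_nhds_subtype_val (0 : B))

end FiniteDimensional

theorem tendsto_const_smul_nhdsWithin_zero {R M : Type*} [Semiring R] [AddCommMonoid M]
    [Module R M] [TopologicalSpace M] [ContinuousConstSMul R M] (V : Submodule R M) (c : R) :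
    Tendsto (c • ·) (𝓝[V] (0 : M)) (𝓝[V] 0) := by
  have hc : ContinuousWithinAt (c • · : M → M) V 0 := by fun_prop
  simpa only [smul_zero] using hc.tendsto_nhdsWithin fun _ hx => V.smul_mem c hx

theorem mem_nhdsWithin_affineSubspace_iff {R V P : Type*} [Ring R] [AddCommGroup V] [Module R V]
    [TopologicalSpace V] [AddTorsor V P] [TopologicalSpace P] [IsTopologicalAddTorsor P]
    {L : AffineSubspace R P} {p : P} (hp : p ∈ L) {s : Set P} :
    s ∈ 𝓝[L] p ↔ Homeomorph.vaddConst p ⁻¹' s ∈ 𝓝[L.direction] (0 : V) := by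
  have himage : Homeomorph.vaddConst p '' L.direction = (L : Set P) := by
    rw [← (Homeomorph.vaddConst p).preimage_symm]
    ext x
    exact L.vsub_right_mem_direction_iff_mem hp x
  rw [← mem_map, (Homeomorph.vaddConst p).isEmbedding.map_nhdsWithin_eq, himage,
    Homeomorph.vaddConst_apply, zero_vadd]

section Convex

variable {E : Type*} [AddCommGroup E] [Module ℝ E] [TopologicalSpace E] {C D : Set E}

theorem mem_nhdsWithin_zero_sup_of_convex [IsTopologicalAddGroup E] [ContinuousSMul ℝ E] [T2Space E]
    {A B : Submodule ℝ E} [FiniteDimensional ℝ A] [FiniteDimensional ℝ B] (hC : Convex ℝ C)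
    (hA : C ∈ 𝓝[A] 0) (hB : C ∈ 𝓝[B] 0) : C ∈ 𝓝[(A ⊔ B : Submodule ℝ E)] 0 := by
  have half_smul_mem (V : Submodule ℝ E) (hV : C ∈ 𝓝[V] 0) : (1 / 2 : ℝ) • C ∈ 𝓝[V] 0 := by
    filter_upwards [tendsto_const_smul_nhdsWithin_zero V (2 : ℝ) hV] with x hx
    exact ⟨(2 : ℝ) • x, hx, by module⟩
  rw [nhdsWithin_zero_sup_eq_add]
  exact mem_of_superset (add_mem_add (half_smul_mem A hA) (half_smul_mem B hB))
    (hC.set_combo_subset (by norm_num) (by norm_num) (by norm_num))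

theorem frontier_mem_nhdsWithin_zero_of_closure_mem [IsTopologicalAddGroup E]
    [ContinuousConstSMul ℝ E] {V : Submodule ℝ E} (hD : Convex ℝ D) (h0 : 0 ∉ interior D)
    (h : closure D ∈ 𝓝[V] 0) : frontier D ∈ 𝓝[V] 0 := by
  filter_upwards [h, tendsto_const_smul_nhdsWithin_zero V (-1 : ℝ) h] with x hx hneg
  refine ⟨hx, fun hint => h0 ?_⟩
  have h0_mem : (0 : E) ∈ openSegment ℝ x ((-1 : ℝ) • x) := by
    simpa using mem_openSegment_add_sub (𝕜 := ℝ) 0 x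
  exact hD.openSegment_interior_closure_subset_interior hint hneg h0_mem

variable [IsTopologicalAddGroup E] [ContinuousSMul ℝ E] [T2Space E]

theorem frontier_mem_nhdsWithin_zero_sup_of_convex {A B : Submodule ℝ E} [FiniteDimensional ℝ A]
    [FiniteDimensional ℝ B] (hD : Convex ℝ D) (hA : frontier D ∈ 𝓝[A] 0)
    (hB : frontier D ∈ 𝓝[B] 0) : frontier D ∈ 𝓝[(A ⊔ B : Submodule ℝ E)] 0 :=
  have h0 : (0 : E) ∈ frontier D := mem_of_mem_nhdsWithin A.zero_mem hA
  frontier_mem_nhdsWithin_zero_of_closure_mem hD h0.2 <|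
    mem_nhdsWithin_zero_sup_of_convex hD.closure (mem_of_superset hA frontier_subset_closure)
      (mem_of_superset hB frontier_subset_closure)

theorem stmt_3_general {p : E} {L₁ L₂ : AffineSubspace ℝ E} [FiniteDimensional ℝ L₁.direction]
    [FiniteDimensional ℝ L₂.direction] (hD : Convex ℝ D) (hp₁ : p ∈ L₁) (hp₂ : p ∈ L₂)
    (h₁ : frontier D ∈ 𝓝[L₁] p) (h₂ : frontier D ∈ 𝓝[L₂] p) :
    frontier D ∈ 𝓝[affineSpan ℝ (L₁ ∪ L₂ : Set E)] p := by
  have hp : p ∈ L₁ ⊔ L₂ := le_sup_left (a := L₁) hp₁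
  rw [mem_nhdsWithin_affineSubspace_iff hp₁, Homeomorph.preimage_frontier] at h₁
  rw [mem_nhdsWithin_affineSubspace_iff hp₂, Homeomorph.preimage_frontier] at h₂
  rw [AffineSubspace.span_union, AffineSubspace.affineSpan_coe, AffineSubspace.affineSpan_coe,
    mem_nhdsWithin_affineSubspace_iff hp, Homeomorph.preimage_frontier,
    AffineSubspace.direction_sup_eq_sup_direction hp₁ hp₂]
  exact frontier_mem_nhdsWithin_zero_sup_of_convex (hD.translate_preimage_left p) h₁ h₂

end Convex

end

/-- If two distinct lines through a boundary point p of a convex set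
D ⊆ ℝ^{n+1} are each locally contained in ∂D near p, then the affine 2-plane they span
is locally contained in ∂D near p. -/
theorem stmt_3 (n : ℕ) (D : Set (EuclideanSpace ℝ (Fin (n + 1))))
    (hD : Convex ℝ D) (hint : (interior D).Nonempty)
    (p : EuclideanSpace ℝ (Fin (n + 1))) (hp : p ∈ frontier D)
    (L₁ L₂ : AffineSubspace ℝ (EuclideanSpace ℝ (Fin (n + 1))))
    (hL₁dim : Module.finrank ℝ L₁.direction = 1)
    (hL₂dim : Module.finrank ℝ L₂.direction = 1)
    (hpL₁ : p ∈ L₁) (hpL₂ : p ∈ L₂) (hne : L₁ ≠ L₂)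
    (hloc₁ : ∃ U ∈ nhds p, (L₁ : Set (EuclideanSpace ℝ (Fin (n + 1)))) ∩ U ⊆ frontier D)
    (hloc₂ : ∃ U ∈ nhds p, (L₂ : Set (EuclideanSpace ℝ (Fin (n + 1)))) ∩ U ⊆ frontier D) :
    ∃ U ∈ nhds p,
      (affineSpan ℝ ((L₁ : Set (EuclideanSpace ℝ (Fin (n + 1)))) ∪ L₂) :
        Set (EuclideanSpace ℝ (Fin (n + 1)))) ∩ U ⊆ frontier D := by
  simp only [inter_comm, ← mem_nhdsWithin_iff_exists_mem_nhds_inter] at hloc₁ hloc₂ ⊢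
  exact stmt_3_general hD hpL₁ hpL₂ hloc₁ hloc₂
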